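/- Let G be a simple graph on n vertices and let π be an almost equitable partition of G with k < n cells and characteristic matrix P_π. If b ∈ {0,1}^n is constant on each cell of π, i.e., b = P_π b̄ for some b̄ ∈ {0,1}^k, then the pair (L(G), b) is uncontrollable. -/

import Mathlib

open Classical Matrix

noncomputable def lap {n : ℕ} (G : SimpleGraph (Fin n)) : Matrix (Fin n) (Fin n) ℝ :=
  Matrix.of fun i j =>
    (if i = j then ((G.neighborSet i).ncard : ℝ) else 0) - (if G.Adj i j then 1 else 0)

def IsTwin {n : ℕ} (G : SimpleGraph (Fin n)) (u v : Fin n) : Prop :=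
  u ≠ v ∧ G.neighborSet u \ {v} = G.neighborSet v \ {u}

def IsEigenvalue {n : ℕ} (M : Matrix (Fin n) (Fin n) ℝ) (μ : ℝ) : Prop :=
  ∃ x : Fin n → ℝ, x ≠ 0 ∧ M.mulVec x = μ • x

def HasSimpleSpectrum {n : ℕ} (M : Matrix (Fin n) (Fin n) ℝ) : Prop :=
  ∃ μ : Fin n → ℝ, Function.Injective μ ∧ ∀ i, IsEigenvalue M (μ i)

def Controllable {n : ℕ} (M : Matrix (Fin n) (Fin n) ℝ) (b : Fin n → ℝ) : Prop :=
  Submodule.span ℝ (Set.range fun k : Fin n => (M ^ (k : ℕ)).mulVec b) = ⊤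

def StronglyUncontrollable {n : ℕ} (G : SimpleGraph (Fin n)) : Prop :=
  G.Connected ∧ HasSimpleSpectrum (lap G) ∧
    ∀ b : Fin n → ℝ, (∀ i, b i = 0 ∨ b i = 1) → ¬ Controllable (lap G) b

def Pmat {n k : ℕ} (c : Fin n → Fin k) : Matrix (Fin n) (Fin k) ℝ :=
  Matrix.of fun i j => if c i = j then 1 else 0

def IsAEP {n k : ℕ} (G : SimpleGraph (Fin n)) (c : Fin n → Fin k) : Prop :=
  ∀ i j : Fin k, i ≠ j → ∀ x y : Fin n, c x = i → c y = i →
    (G.neighborSet x ∩ {z | c z = j}).ncard = (G.neighborSet y ∩ {z | c z = j}).ncard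

noncomputable def quotLap {n k : ℕ} (G : SimpleGraph (Fin n)) (c : Fin n → Fin k) :
    Matrix (Fin k) (Fin k) ℝ :=
  ((Pmat c)ᵀ * Pmat c)⁻¹ * (Pmat c)ᵀ * lap G * Pmat c

def IsQuotAEP {k m : ℕ} (Lq : Matrix (Fin k) (Fin k) ℝ) (r : Fin k → Fin m) : Prop :=
  ∀ a b : Fin m, a ≠ b → ∀ C C' : Fin k, r C = a → r C' = a →
    ∑ C'' ∈ Finset.univ.filter (fun C'' => r C'' = b), Lq C C'' =
      ∑ C'' ∈ Finset.univ.filter (fun C'' => r C'' = b), Lq C' C''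

def IsGraphAut {n : ℕ} (G : SimpleGraph (Fin n)) (σ : Equiv.Perm (Fin n)) : Prop :=
  ∀ x y, G.Adj x y ↔ G.Adj (σ x) (σ y)

def joinOne {n : ℕ} (G : SimpleGraph (Fin n)) : SimpleGraph (Fin (n + 1)) where
  Adj x y := x ≠ y ∧ ((x : ℕ) = n ∨ (y : ℕ) = n ∨
    ∃ (hx : (x : ℕ) < n) (hy : (y : ℕ) < n), G.Adj ⟨x, hx⟩ ⟨y, hy⟩)
  symm := by
    constructor
    rintro x y ⟨hxy, h⟩
    refine ⟨hxy.symm, ?_⟩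
    rcases h with h | h | ⟨hx, hy, h⟩
    exacts [Or.inr (Or.inl h), Or.inl h, Or.inr (Or.inr ⟨hy, hx, h.symm⟩)]
  loopless := ⟨fun x h => h.1 rfl⟩

def joinTwo {n : ℕ} (G : SimpleGraph (Fin n)) : SimpleGraph (Fin (n + 2)) where
  Adj x y := x ≠ y ∧ (((x : ℕ) < n ∧ n ≤ (y : ℕ)) ∨ ((y : ℕ) < n ∧ n ≤ (x : ℕ)) ∨
    ∃ (hx : (x : ℕ) < n) (hy : (y : ℕ) < n), G.Adj ⟨x, hx⟩ ⟨y, hy⟩)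
  symm := by
    constructor
    rintro x y ⟨hxy, h⟩
    refine ⟨hxy.symm, ?_⟩
    rcases h with h | h | ⟨hx, hy, h⟩
    exacts [Or.inr (Or.inl h), Or.inl h, Or.inr (Or.inr ⟨hy, hx, h.symm⟩)]
  loopless := ⟨fun x h => h.1 rfl⟩

def addPendant {n : ℕ} (G : SimpleGraph (Fin n)) (v : Fin n) : SimpleGraph (Fin (n + 1)) where
  Adj x y := ((x : ℕ) = n ∧ (y : ℕ) = (v : ℕ)) ∨ ((y : ℕ) = n ∧ (x : ℕ) = (v : ℕ)) ∨
    ∃ (hx : (x : ℕ) < n) (hy : (y : ℕ) < n), G.Adj ⟨x, hx⟩ ⟨y, hy⟩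
  symm := by
    constructor
    rintro x y (h | h | ⟨hx, hy, h⟩)
    exacts [Or.inr (Or.inl h), Or.inl h, Or.inr (Or.inr ⟨hy, hx, h.symm⟩)]
  loopless := by
    constructor
    intro x h
    have hv := v.isLt
    rcases h with ⟨h1, h2⟩ | ⟨h1, h2⟩ | ⟨hx, hy, h⟩
    · omega
    · omega
    · exact G.loopless.irrefl _ h

/-!
On a vector that is constant on cells, the Laplacian only sees how many neighbours a vertex has in
each cell: `(L f) x = ∑ j, |N(x) ∩ C_j| (f(x) - f(C_j))`. The term of the cell of `x` itself
vanishes, so for an almost equitable partition `L f` is again constant on cells. Hence the range of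
`P_π` is an `L`-invariant subspace containing `b`; it contains every `L ^ m b`, and it is proper as
soon as some cell has two vertices.
-/

theorem Controllable.eq_top_of_mem_invtSubmodule {n : ℕ} {M : Matrix (Fin n) (Fin n) ℝ}
    {b : Fin n → ℝ} (h : Controllable M b) {p : Submodule ℝ (Fin n → ℝ)}
    (hp : p ∈ Module.End.invtSubmodule M.toLin') (hb : b ∈ p) : p = ⊤ := by
  have pow_mulVec_mem (m : ℕ) : (M ^ m) *ᵥ b ∈ p := by
    rw [← toLin'_apply, toLin'_pow]
    exact Module.End.pow_apply_mem_of_forall_mem m hp b hb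
  have span_le : Submodule.span ℝ (Set.range fun m : Fin n => (M ^ (m : ℕ)) *ᵥ b) ≤ p :=
    Submodule.span_le.mpr (Set.range_subset_iff.mpr fun m => pow_mulVec_mem m)
  exact top_le_iff.mp (h.ge.trans span_le)

section Laplacian

theorem lap_eq_lapMatrix {n : ℕ} (G : SimpleGraph (Fin n)) : lap G = G.lapMatrix ℝ := by
  ext i j
  simp only [lap, SimpleGraph.lapMatrix, SimpleGraph.degMatrix, of_apply, Matrix.sub_apply,
    diagonal_apply, SimpleGraph.adjMatrix_apply, ← G.card_neighborSet_eq_degree,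
    Set.ncard_eq_toFinset_card', Set.toFinset_card]

variable {V ι R : Type*} [Fintype V] [DecidableEq V] [NonAssocRing R]

theorem lapMatrix_mulVec_eq_sum_sub (G : SimpleGraph V) [DecidableRel G.Adj] (f : V → R) (x : V) :
    (G.lapMatrix R *ᵥ f) x = ∑ u ∈ G.neighborFinset x, (f x - f u) := by
  rw [SimpleGraph.lapMatrix_mulVec_apply, Finset.sum_sub_distrib, Finset.sum_const,
    SimpleGraph.card_neighborFinset_eq_degree, nsmul_eq_mul]

theorem lapMatrix_mulVec_comp_eq_sum_ncard [Fintype ι] (G : SimpleGraph V) [DecidableRel G.Adj]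
    (c : V → ι) (g : ι → R) (x : V) :
    (G.lapMatrix R *ᵥ (g ∘ c)) x =
      ∑ j, (G.neighborSet x ∩ {z | c z = j}).ncard * (g (c x) - g j) := by
  have ncard_eq (j : ι) : (G.neighborSet x ∩ {z | c z = j}).ncard =
      ({u ∈ G.neighborFinset x | c u = j} : Finset V).card := by
    rw [← Set.ncard_coe_finset]
    congr 1
    ext u
    simp
  simp only [lapMatrix_mulVec_eq_sum_sub, Function.comp_apply, ncard_eq, ← nsmul_eq_mul,
    ← Finset.sum_const]
  exact (Finset.sum_fiberwise' _ c fun j => g (c x) - g j).symm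

end Laplacian

section Partition

variable {n k : ℕ} {G : SimpleGraph (Fin n)} {c : Fin n → Fin k}

theorem Pmat_mulVec (c : Fin n → Fin k) (g : Fin k → ℝ) : Pmat c *ᵥ g = g ∘ c := by
  ext x
  simp [Pmat, mulVec, dotProduct]

theorem mem_range_Pmat_mulVecLin {f : Fin n → ℝ} :
    f ∈ LinearMap.range (Pmat c).mulVecLin ↔ f.FactorsThrough c := by
  simp only [LinearMap.mem_range, mulVecLin_apply, Pmat_mulVec, Function.factorsThrough_iff,
    eq_comm]

theorem injective_of_range_Pmat_mulVecLin_eq_top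
    (h : LinearMap.range (Pmat c).mulVecLin = ⊤) : Function.Injective c := by
  intro x y hxy
  have hsingle : (Pi.single x 1 : Fin n → ℝ).FactorsThrough c :=
    mem_range_Pmat_mulVecLin.mp (h ▸ Submodule.mem_top)
  by_contra hne
  simpa [Ne.symm hne] using hsingle hxy

theorem IsAEP.factorsThrough_lap_mulVec_comp (hπ : IsAEP G c) (g : Fin k → ℝ) :
    (lap G *ᵥ (g ∘ c)).FactorsThrough c := by
  intro x y hxy
  simp only [lap_eq_lapMatrix, lapMatrix_mulVec_comp_eq_sum_ncard]
  refine Finset.sum_congr rfl fun j _ => ?_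
  obtain hj | hj := eq_or_ne (c x) j
  · simp [← hxy, hj]
  · rw [hπ (c x) j hj x y rfl hxy.symm, hxy]

theorem IsAEP.range_Pmat_mem_invtSubmodule (hπ : IsAEP G c) :
    LinearMap.range (Pmat c).mulVecLin ∈ Module.End.invtSubmodule (lap G).toLin' := by
  rintro _ ⟨g, rfl⟩
  rw [Submodule.mem_comap, mem_range_Pmat_mulVecLin, mulVecLin_apply, Pmat_mulVec, toLin'_apply]
  exact hπ.factorsThrough_lap_mulVec_comp g

end Partition

theorem stmt16_general {n k : ℕ} (G : SimpleGraph (Fin n)) (c : Fin n → Fin k)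
    (hc : ¬ Function.Injective c) (hπ : IsAEP G c) (bbar : Fin k → ℝ) :
    ¬ Controllable (lap G) ((Pmat c).mulVec bbar) := fun h =>
  hc <| injective_of_range_Pmat_mulVecLin_eq_top <|
    h.eq_top_of_mem_invtSubmodule hπ.range_Pmat_mem_invtSubmodule ⟨bbar, rfl⟩

theorem stmt16 {n k : ℕ} (hk : k < n) (G : SimpleGraph (Fin n))
    (c : Fin n → Fin k) (hcsurj : Function.Surjective c) (hπ : IsAEP G c)
    (b : Fin n → ℝ) (bbar : Fin k → ℝ) (hbin : ∀ j, bbar j = 0 ∨ bbar j = 1)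
    (hb : b = (Pmat c).mulVec bbar) :
    ¬ Controllable (lap G) b :=
  hb ▸ stmt16_general G c (fun hc => hk.not_ge (Fin.le_of_injective c hc)) hπ bbar
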